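/- arXiv:1401.7923 — 3 statements merged into one kernel-verified Lean document; each statement's English description precedes it below -/
import Mathlib

section
/- For any finite simple graph G, the function z ↦ Y(z) is coordinatewise non-decreasing on (0,∞), and the function z ↦ Y(z)/z is coordinatewise non-increasing on (0,∞). -/
/-!
The proof compares two fixed points through their extreme ratios. For `z₁ ≤ z₂` let `m` and `M` be
the least and largest values of `Y z₂ e / Y z₁ e` over the finitely many directed edges. Since
`Y z e * (1 + S) = z`, where `S` is the sum of the incoming messages, and `S` is linear and monotone
in the messages, evaluating the fixed-point equations where the two extremes are attained gives
`m ≥ c (1 + S) / (1 + M S)` and `M ≤ c (1 + T) / (1 + m T)`, with `c = z₂ / z₁ ≥ 1` and `S, T ≥ 0`.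
If `m < 1`, the second inequality forces `m M < c`, whereas the first gives `m M > c` when `1 < M`
and `m ≥ c ≥ 1` when `M ≤ 1`; both are absurd. So `1 ≤ m`, and then the second inequality gives
`M ≤ c`. These two bounds are the two monotonicity claims (`extreme_ratio_bounds`).
-/

open Finset Filter Topology

variable {V : Type*} [Fintype V] [DecidableEq V]

namespace SimpleGraph

variable (G : SimpleGraph V) [DecidableRel G.Adj]

/-- The type of directed edges of `G`. -/
abbrev DEdge : Type _ := {p : V × V // G.Adj p.1 p.2}

/-- Reversal of a directed edge. -/
def rev (e : G.DEdge) : G.DEdge := ⟨(e.1.2, e.1.1), e.2.symm⟩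

/-- Sum of the messages `X (w → u)` over `w ∈ ∂u \ {v}`. -/
def exclSum {M : Type*} [AddCommMonoid M] (X : G.DEdge → M) (u v : V) : M :=
  ∑ w ∈ ((G.neighborFinset u).erase v).attach,
    X ⟨(w.1, u), ((mem_neighborFinset _ _ _).mp (Finset.mem_of_mem_erase w.2)).symm⟩

/-- The BP map `ℛ_G`: `(ℛ_G X)_{u→v} = 1 / (1 + ∑_{w ∈ ∂u∖v} X_{w→u})`. -/
noncomputable def bpR (X : G.DEdge → ℝ) (e : G.DEdge) : ℝ :=
  1 / (1 + G.exclSum X e.1.1 e.1.2)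

/-- `Y` is a positive fixed point of `X = z ⬝ ℛ_G X`. -/
def IsBPFixed (z : ℝ) (Y : G.DEdge → ℝ) : Prop :=
  (∀ e, 0 < Y e) ∧ ∀ e, Y e = z * G.bpR Y e

/-- Sum of messages pointing into `v`. -/
def inFlow {M : Type*} [AddCommMonoid M] (X : G.DEdge → M) (v : V) : M :=
  ∑ u ∈ (G.neighborFinset v).attach,
    X ⟨(u.1, v), ((mem_neighborFinset _ _ _).mp u.2).symm⟩

/-- Sum of messages pointing out of `v`. -/
def outFlow {M : Type*} [AddCommMonoid M] (X : G.DEdge → M) (v : V) : M :=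
  ∑ u ∈ (G.neighborFinset v).attach,
    X ⟨(v, u.1), (mem_neighborFinset _ _ _).mp u.2⟩

/-- The map `𝒫_G` on `{0,1}`-valued messages. -/
def bpP (I : G.DEdge → ℕ) (e : G.DEdge) : ℕ :=
  if G.exclSum I e.1.1 e.1.2 = 0 then 1 else 0

/-- `F_v(I) = min(1, Σ_{u ∈ ∂v} I_{u→v}) + max(0, 1 − Σ_{u ∈ ∂v} I_{v→u})`. -/
def Fv (I : G.DEdge → ℕ) (v : V) : ℕ :=
  min 1 (G.inFlow I v) + (1 - G.outFlow I v)

/-- The value `x_e(z)` built from the messages. -/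
noncomputable def xval (Y : G.DEdge → ℝ) (z : ℝ) (e : G.DEdge) : ℝ :=
  Y e * Y (G.rev e) / (z + Y e * Y (G.rev e))

/-- Weight (number of present edges) of a `{0,1}`-vector on edges. -/
def mWeight (B : G.edgeSet → Bool) : ℕ := ∑ e : G.edgeSet, if B e then 1 else 0

/-- `B` is (the indicator vector of) a matching. -/
def IsMatchingVec (B : G.edgeSet → Bool) : Prop :=
  ∀ v : V, (∑ e : G.edgeSet, if B e ∧ v ∈ (e : Sym2 V) then 1 else 0) ≤ 1

instance (B : G.edgeSet → Bool) : Decidable (G.IsMatchingVec B) := by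
  unfold IsMatchingVec; infer_instance

/-- Partition function of the monomer-dimer model. -/
noncomputable def gibbsP (z : ℝ) : ℝ :=
  ∑ B : G.edgeSet → Bool, if G.IsMatchingVec B then z ^ G.mWeight B else 0

/-- Edges incident to `v`. -/
def incE (v : V) : Finset G.edgeSet :=
  Finset.univ.filter (fun e => v ∈ (e : Sym2 V))

end SimpleGraph



namespace SimpleGraph

variable (G : SimpleGraph V) [DecidableRel G.Adj]

lemma exclSum_mono {X X' : G.DEdge → ℝ} (h : ∀ e, X e ≤ X' e) (u v : V) :
    G.exclSum X u v ≤ G.exclSum X' u v :=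
  Finset.sum_le_sum fun _ _ => h _

lemma exclSum_mul_left (a : ℝ) (X : G.DEdge → ℝ) (u v : V) :
    G.exclSum (fun e => a * X e) u v = a * G.exclSum X u v :=
  (Finset.mul_sum _ _ _).symm

lemma exclSum_nonneg {X : G.DEdge → ℝ} (h : ∀ e, 0 < X e) (u v : V) :
    0 ≤ G.exclSum X u v :=
  Finset.sum_nonneg fun _ _ => (h _).le

lemma IsBPFixed.mul_eq {z : ℝ} {Y : G.DEdge → ℝ} (h : G.IsBPFixed z Y) (e : G.DEdge) :
    Y e * (1 + G.exclSum Y e.1.1 e.1.2) = z := by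
  have hS := G.exclSum_nonneg h.1 e.1.1 e.1.2
  rw [h.2 e, bpR, mul_assoc, one_div, inv_mul_cancel₀ (by positivity), mul_one]

/-- The scalar heart of the argument: `hm` and `hM` are the fixed-point equations at edges where the
ratio of the two solutions attains its minimum `m` and its maximum `M`; `S₁, S₂` and `T₁, T₂` are
the incoming sums of the two solutions at these edges. -/
lemma extreme_ratio_bounds {z₁ z₂ m M S₁ S₂ T₁ T₂ : ℝ} (hz₁ : 0 < z₁) (hz : z₁ ≤ z₂)
    (hm0 : 0 < m) (hM0 : 0 < M) (hS₁ : 0 ≤ S₁) (hT₁ : 0 ≤ T₁)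
    (hS : S₂ ≤ M * S₁) (hT : m * T₁ ≤ T₂)
    (hm : m * (1 + S₂) * z₁ = z₂ * (1 + S₁)) (hM : M * (1 + T₂) * z₁ = z₂ * (1 + T₁)) :
    1 ≤ m ∧ M * z₁ ≤ z₂ := by
  have hz₂ : 0 < z₂ := hz₁.trans_le hz
  have hm' : z₂ * (1 + S₁) ≤ m * (1 + M * S₁) * z₁ := by rw [← hm]; gcongr
  have hM' : M * (1 + m * T₁) * z₁ ≤ z₂ * (1 + T₁) := by rw [← hM]; gcongr
  have h1 : 1 ≤ m := by
    by_contra! hlt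
    have hupper : m * M * z₁ < z₂ := by
      have h : m * M * z₁ * (1 + m * T₁) < z₂ * (1 + m * T₁) := by
        nlinarith [mul_le_mul_of_nonneg_left hM' hm0.le, mul_pos hz₂ (sub_pos.2 hlt)]
      exact lt_of_mul_lt_mul_right h (by positivity)
    rcases lt_or_ge 1 M with h | h
    · have h' : z₂ * (1 + M * S₁) < m * M * z₁ * (1 + M * S₁) := by
        nlinarith [mul_le_mul_of_nonneg_left hm' hM0.le, mul_pos hz₂ (sub_pos.2 h)]
      exact hupper.not_gt (lt_of_mul_lt_mul_right h' (by positivity))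
    · have h' : z₂ * (1 + S₁) ≤ m * z₁ * (1 + S₁) := by
        calc z₂ * (1 + S₁) ≤ m * (1 + M * S₁) * z₁ := hm'
          _ ≤ m * (1 + 1 * S₁) * z₁ := by gcongr
          _ = m * z₁ * (1 + S₁) := by ring
      have := le_of_mul_le_mul_right h' (by positivity)
      nlinarith
  refine ⟨h1, ?_⟩
  have h' : M * z₁ * (1 + T₁) ≤ z₂ * (1 + T₁) := by
    calc M * z₁ * (1 + T₁) = M * (1 + 1 * T₁) * z₁ := by ring
      _ ≤ M * (1 + m * T₁) * z₁ := by gcongr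
      _ ≤ z₂ * (1 + T₁) := hM'
  exact le_of_mul_le_mul_right h' (by positivity)

/-- No uniqueness of fixed points is needed: the bounds hold for any two positive fixed points. -/
lemma IsBPFixed.compare {z₁ z₂ : ℝ} {Y₁ Y₂ : G.DEdge → ℝ} (h₁ : G.IsBPFixed z₁ Y₁)
    (h₂ : G.IsBPFixed z₂ Y₂) (hz₁ : 0 < z₁) (hz : z₁ ≤ z₂) (e : G.DEdge) :
    Y₁ e ≤ Y₂ e ∧ Y₂ e / z₂ ≤ Y₁ e / z₁ := by
  have hz₂ : 0 < z₂ := hz₁.trans_le hz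
  have : Nonempty G.DEdge := ⟨e⟩
  obtain ⟨a, ha⟩ := Finite.exists_min fun e => Y₂ e / Y₁ e
  obtain ⟨b, hb⟩ := Finite.exists_max fun e => Y₂ e / Y₁ e
  have hma : Y₂ a = Y₂ a / Y₁ a * Y₁ a := (div_mul_cancel₀ _ (h₁.1 a).ne').symm
  have hMb : Y₂ b = Y₂ b / Y₁ b * Y₁ b := (div_mul_cancel₀ _ (h₁.1 b).ne').symm
  have hm0 : 0 < Y₂ a / Y₁ a := div_pos (h₂.1 a) (h₁.1 a)
  have hM0 : 0 < Y₂ b / Y₁ b := div_pos (h₂.1 b) (h₁.1 b)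
  generalize Y₂ a / Y₁ a = m at *
  generalize Y₂ b / Y₁ b = M at *
  have hlo : ∀ e, m * Y₁ e ≤ Y₂ e := fun e => (le_div_iff₀ (h₁.1 e)).1 (ha e)
  have hhi : ∀ e, Y₂ e ≤ M * Y₁ e := fun e => (div_le_iff₀ (h₁.1 e)).1 (hb e)
  have hS := G.exclSum_mono hhi a.1.1 a.1.2
  have hT := G.exclSum_mono hlo b.1.1 b.1.2
  rw [exclSum_mul_left] at hS hT
  obtain ⟨h1, h2⟩ := extreme_ratio_bounds hz₁ hz hm0 hM0
    (G.exclSum_nonneg h₁.1 a.1.1 a.1.2) (G.exclSum_nonneg h₁.1 b.1.1 b.1.2) hS hT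
    (by
      have e1 := IsBPFixed.mul_eq G h₁ a
      have e2 := IsBPFixed.mul_eq G h₂ a
      rw [hma] at e2
      rw [← e2]
      conv_lhs => rw [← e1]
      ring)
    (by
      have e1 := IsBPFixed.mul_eq G h₁ b
      have e2 := IsBPFixed.mul_eq G h₂ b
      rw [hMb] at e2
      rw [← e2]
      conv_lhs => rw [← e1]
      ring)
  have hpos := h₁.1 e
  constructor
  · nlinarith [hlo e]
  · rw [div_le_div_iff₀ hz₂ hz₁]
    nlinarith [mul_le_mul_of_nonneg_right (hhi e) hz₁.le, mul_le_mul_of_nonneg_left h2 hpos.le]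

end SimpleGraph

/-- `z ↦ Y(z)` is coordinatewise non-decreasing and `z ↦ Y(z)/z` is coordinatewise
non-increasing on `(0,∞)`. -/
theorem labp_monotone (G : SimpleGraph V) [DecidableRel G.Adj]
    (Y : ℝ → G.DEdge → ℝ) (hY : ∀ z, 0 < z → G.IsBPFixed z (Y z)) :
    (∀ z₁ z₂, 0 < z₁ → z₁ ≤ z₂ → ∀ e, Y z₁ e ≤ Y z₂ e) ∧
    (∀ z₁ z₂, 0 < z₁ → z₁ ≤ z₂ → ∀ e, Y z₂ e / z₂ ≤ Y z₁ e / z₁) :=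
  ⟨fun _ _ h₁ h e =>
    (SimpleGraph.IsBPFixed.compare G (hY _ h₁) (hY _ (h₁.trans_le h)) h₁ h e).1,
   fun _ _ h₁ h e =>
    (SimpleGraph.IsBPFixed.compare G (hY _ h₁) (hY _ (h₁.trans_le h)) h₁ h e).2⟩
end

section
/- If G is a finite tree, then for every edge e ∈ E with orientation e⃗, the law of B_e under the Gibbs distribution μ_G^z is Bernoulli with μ_G^z(B_e = 1) = Y_{e⃗}(z)·ℛ_{−e⃗}(Y(z)) / (1 + Y_{e⃗}(z)·ℛ_{−e⃗}(Y(z))), where ℛ_{−e⃗}(Y(z)) denotes the (−e⃗)-coordinate of ℛ_G(Y(z)). -/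
/-!
Write `Z(S)` for the matching sum of the subgraph induced on a vertex set `S` (`vertZ`). Sorting
matchings according to the edge that covers `u ∈ S` gives the recursion
`Z(S) = Z(S∖u) + ∑_{w ∼ u, w ∈ S} z Z(S∖{u,w})` (`vertZ_rec`).

If `v ∼ u`, `v ∉ S`, and `S` contains the branch at `u` away from `v`, that is, every vertex which
some walk from `u` reaches while avoiding `v`, then `z Z(S∖u) = Y_{u→v} Z(S)` (`vertZ_ratio`). This
goes by induction on `|S|`: for each neighbour `w ≠ v` of `u`, acyclicity puts the branch at `w`
away from `u` inside `S∖u` (`branch_subset`), so the terms of the recursion are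
`Y_{w→u} Z(S∖u)`, and the fixed-point equation for `Y_{u→v}` closes the induction. Since `S` is only
required to contain the branch, no factorization of `Z` over components is needed.

Applying this to `S = V∖v` and each neighbour of `v`, the recursion at `v` gives
`Z(V) = (1 + ∑_{w ∼ v} Y_{w→v}) Z(V∖v) = (1 / ℛ_{v→u} + Y_{u→v}) Z(V∖v)`, and the matchings
containing `uv` contribute `z Z(V∖{u,v}) = Y_{u→v} Z(V∖v)` to it.
-/

open Finset Filter Topology

variable {V : Type*} [Fintype V] [DecidableEq V]

namespace SimpleGraph

variable (G : SimpleGraph V) [DecidableRel G.Adj]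

theorem isMatchingVec_iff (B : G.edgeSet → Bool) :
    G.IsMatchingVec B ↔ ∀ (x : V) (e f : G.edgeSet), B e → B f →
      x ∈ (e : Sym2 V) → x ∈ (f : Sym2 V) → e = f := by
  unfold IsMatchingVec
  refine forall_congr' fun x => ?_
  rw [Finset.sum_boole]
  simp only [Nat.cast_id, Finset.card_le_one, Finset.mem_filter, Finset.mem_univ, true_and]
  constructor
  · intro h e f he hf hxe hxf
    exact h e ⟨he, hxe⟩ f ⟨hf, hxf⟩
  · intro h e he f hf
    exact h e f he.1 hf.1 he.2 hf.2

/-- `B` is a matching all of whose edges have both endpoints in `S`. -/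
def MatchIn (S : Finset V) (B : G.edgeSet → Bool) : Prop :=
  G.IsMatchingVec B ∧ ∀ e : G.edgeSet, B e → ∀ x ∈ (e : Sym2 V), x ∈ S

open Classical in
/-- Matching sum of the subgraph induced on `S`, as a sum over edge vectors of the whole graph. -/
noncomputable def vertZ (z : ℝ) (S : Finset V) : ℝ :=
  ∑ B : G.edgeSet → Bool, if G.MatchIn S B then z ^ G.mWeight B else 0

/-- The edge `uw` exists in `G` and is present in `B`. -/
def Uses (B : G.edgeSet → Bool) (u w : V) : Prop :=
  ∃ h : G.Adj u w, B ⟨s(u, w), G.mem_edgeSet.mpr h⟩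

theorem vertZ_pos {z : ℝ} (hz : 0 < z) (S : Finset V) : 0 < G.vertZ z S := by
  classical
  unfold vertZ
  apply Finset.sum_pos'
  · intro B _
    split_ifs <;> positivity
  · refine ⟨fun _ => false, Finset.mem_univ _, ?_⟩
    have h : G.MatchIn S (fun _ => false) :=
      ⟨(G.isMatchingVec_iff _).2 (by simp), by simp⟩
    rw [if_pos h]
    positivity

theorem mWeight_update {B : G.edgeSet → Bool} {e : G.edgeSet} (h : B e = false) :
    G.mWeight (Function.update B e true) = G.mWeight B + 1 := by
  unfold mWeight
  rw [← Finset.add_sum_erase _ _ (Finset.mem_univ e),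
    ← Finset.add_sum_erase (a := e) _ (fun e => if B e = true then 1 else 0) (Finset.mem_univ e)]
  simp only [Function.update_self, h]
  rw [Finset.sum_congr rfl (g := fun e => if B e = true then 1 else 0)]
  · simp [add_comm]
  · intro f hf
    rw [Function.update_of_ne (Finset.ne_of_mem_erase hf)]

theorem matchIn_update {S : Finset V} {u w : V} (h : G.Adj u w) (hu : u ∈ S) (hw : w ∈ S)
    {B : G.edgeSet → Bool} (hB : G.MatchIn ((S.erase u).erase w) B) :
    B ⟨s(u, w), G.mem_edgeSet.mpr h⟩ = false ∧
      G.MatchIn S (Function.update B ⟨s(u, w), G.mem_edgeSet.mpr h⟩ true) := by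
  obtain ⟨hm, hs⟩ := hB
  rw [isMatchingVec_iff] at hm
  have key : ∀ f : G.edgeSet, B f → ∀ x ∈ (f : Sym2 V), x ≠ u ∧ x ≠ w ∧ x ∈ S := by
    intro f hf x hx
    have := hs f hf x hx
    simp only [Finset.mem_erase] at this
    tauto
  refine ⟨?_, (G.isMatchingVec_iff _).2 ?_, ?_⟩
  · by_contra hc
    exact (key _ (by simpa using hc) u (by simp)).1 rfl
  · intro x e f he hf hxe hxf
    simp only [Function.update_apply] at he hf
    split_ifs at he hf with h1 h2 h2
    · rw [h1, h2]
    · have := key f hf x hxf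
      subst h1
      simp only [Sym2.mem_iff] at hxe
      tauto
    · have := key e he x hxe
      subst h2
      simp only [Sym2.mem_iff] at hxf
      tauto
    · exact hm x e f he hf hxe hxf
  · intro e he x hx
    simp only [Function.update_apply] at he
    split_ifs at he with h1
    · subst h1
      simp only [Sym2.mem_iff] at hx
      rcases hx with rfl | rfl <;> assumption
    · exact (key e he x hx).2.2

theorem matchIn_update_false {S : Finset V} {u w : V} (h : G.Adj u w)
    {B : G.edgeSet → Bool} (hB : G.MatchIn S B) (he : B ⟨s(u, w), G.mem_edgeSet.mpr h⟩) :
    G.MatchIn ((S.erase u).erase w)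
      (Function.update B ⟨s(u, w), G.mem_edgeSet.mpr h⟩ false) := by
  obtain ⟨hm, hs⟩ := hB
  rw [isMatchingVec_iff] at hm
  have low : ∀ f : G.edgeSet, Function.update B ⟨s(u, w), G.mem_edgeSet.mpr h⟩ false f →
      f ≠ ⟨s(u, w), G.mem_edgeSet.mpr h⟩ ∧ B f := by
    intro f hf
    simp only [Function.update_apply] at hf
    split_ifs at hf with h1
    exact ⟨h1, hf⟩
  refine ⟨(G.isMatchingVec_iff _).2 fun x e f h1 h2 => hm x e f (low e h1).2 (low f h2).2, ?_⟩
  intro f hf x hx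
  obtain ⟨hne, hBf⟩ := low f hf
  simp only [Finset.mem_erase]
  refine ⟨?_, ?_, hs f hBf x hx⟩
  · rintro rfl
    exact hne (hm x _ _ hBf he hx (by simp))
  · rintro rfl
    exact hne (hm x _ _ hBf he hx (by simp))

open Classical in
/-- Removing the edge `uw` is a bijection from the matchings in `S` that contain it to the matchings
in `S ∖ {u, w}`, and lowers the weight by one factor `z`. -/
theorem sum_uses (z : ℝ) {S : Finset V} {u w : V} (h : G.Adj u w) (hu : u ∈ S) (hw : w ∈ S) :
    (∑ B : G.edgeSet → Bool, if G.MatchIn S B ∧ G.Uses B u w then z ^ G.mWeight B else 0) =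
      z * G.vertZ z ((S.erase u).erase w) := by
  unfold vertZ
  rw [← Finset.sum_filter, ← Finset.sum_filter, Finset.mul_sum]
  symm
  refine Finset.sum_nbij' (fun B => Function.update B ⟨s(u, w), G.mem_edgeSet.mpr h⟩ true)
    (fun B => Function.update B ⟨s(u, w), G.mem_edgeSet.mpr h⟩ false) ?_ ?_ ?_ ?_ ?_
  · intro B hB
    simp only [Finset.mem_filter, Finset.mem_univ, true_and] at hB ⊢
    exact ⟨(G.matchIn_update h hu hw hB).2, h, by simp⟩
  · intro B hB
    simp only [Finset.mem_filter, Finset.mem_univ, true_and] at hB ⊢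
    obtain ⟨hB, h', he⟩ := hB
    exact G.matchIn_update_false h hB he
  · intro B hB
    simp only [Finset.mem_filter, Finset.mem_univ, true_and] at hB
    have := (G.matchIn_update h hu hw hB).1
    simp [← this]
  · intro B hB
    simp only [Finset.mem_filter, Finset.mem_univ, true_and] at hB
    obtain ⟨hB, h', he⟩ := hB
    simp [← he]
  · intro B hB
    simp only [Finset.mem_filter, Finset.mem_univ, true_and] at hB
    rw [G.mWeight_update (G.matchIn_update h hu hw hB).1, pow_succ, mul_comm]

open Classical in
/-- A matching in `S` either avoids `u`, or contains exactly one edge at `u`. -/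
theorem matchIn_split (S : Finset V) (u : V) (B : G.edgeSet → Bool) (a : ℝ) :
    (if G.MatchIn S B then a else 0) = (if G.MatchIn (S.erase u) B then a else 0) +
      ∑ w ∈ G.neighborFinset u, if G.MatchIn S B ∧ G.Uses B u w then a else 0 := by
  by_cases hB : G.MatchIn S B
  swap
  · have : ¬ G.MatchIn (S.erase u) B := fun h =>
      hB ⟨h.1, fun e he x hx => Finset.mem_of_mem_erase (h.2 e he x hx)⟩
    simp [hB, this]
  by_cases hex : ∃ w, G.Uses B u w
  · obtain ⟨w, h, he⟩ := hex
    have h1 : ¬ G.MatchIn (S.erase u) B := fun hc => by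
      simpa using hc.2 _ he u (by simp)
    rw [if_pos hB, if_neg h1, zero_add, Finset.sum_eq_single w]
    · rw [if_pos ⟨hB, h, he⟩]
    · rintro w' - hne
      rw [if_neg]
      rintro ⟨-, h', he'⟩
      have := (G.isMatchingVec_iff B).1 hB.1 u _ _ he he' (by simp) (by simp)
      simp only [Subtype.mk.injEq, Sym2.congr_right] at this
      exact hne this.symm
    · intro hc
      simp [h] at hc
  · have h1 : G.MatchIn (S.erase u) B := by
      refine ⟨hB.1, fun e he x hx => Finset.mem_erase.2 ⟨?_, hB.2 e he x hx⟩⟩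
      rintro rfl
      obtain ⟨e, hee⟩ := e
      obtain ⟨w, rfl⟩ := Sym2.mem_iff_exists.1 hx
      exact hex ⟨w, G.mem_edgeSet.1 hee, he⟩
    rw [if_pos hB, if_pos h1, Finset.sum_eq_zero, add_zero]
    intro w _
    rw [if_neg]
    exact fun hc => hex ⟨w, hc.2⟩

/-- Recursion for the matching sum, by the edge covering `u`. -/
theorem vertZ_rec (z : ℝ) {S : Finset V} {u : V} (hu : u ∈ S) :
    G.vertZ z S = G.vertZ z (S.erase u) +
      ∑ w ∈ G.neighborFinset u with w ∈ S, z * G.vertZ z ((S.erase u).erase w) := by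
  classical
  conv_lhs => unfold vertZ
  simp_rw [G.matchIn_split S u]
  rw [Finset.sum_add_distrib, Finset.sum_comm, Finset.sum_filter]
  congr 1
  refine Finset.sum_congr rfl fun w hw => ?_
  rw [mem_neighborFinset] at hw
  split_ifs with h
  · exact G.sum_uses z hw hu h
  · refine Finset.sum_eq_zero fun B _ => if_neg ?_
    rintro ⟨hB, _, he⟩
    exact h (hB.2 _ he w (by simp))

/-- The message `Y_{u→v}`, extended by `0` to non-adjacent pairs. -/
def msg (Y : G.DEdge → ℝ) (u v : V) : ℝ := if h : G.Adj u v then Y ⟨(u, v), h⟩ else 0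

theorem exclSum_eq (Y : G.DEdge → ℝ) (u v : V) :
    G.exclSum Y u v = ∑ w ∈ (G.neighborFinset u).erase v, G.msg Y w u := by
  unfold exclSum
  rw [← Finset.sum_attach _ (fun w => G.msg Y w u)]
  refine Finset.sum_congr rfl fun w _ => ?_
  have h : G.Adj w.1 u := ((mem_neighborFinset _ _ _).mp (Finset.mem_of_mem_erase w.2)).symm
  simp [msg, h]

theorem exclSum_nonneg_s2 {z : ℝ} {Y : G.DEdge → ℝ} (hY : G.IsBPFixed z Y) (u v : V) :
    0 ≤ G.exclSum Y u v :=
  Finset.sum_nonneg fun _ _ => (hY.1 _).le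

/-- Vertices joined to `u` by a walk avoiding `v`. -/
def branch (u v : V) : Set V := {x | ∃ p : G.Walk u x, v ∉ p.support}

variable {G} in
/-- In an acyclic graph, the branch at a neighbour `w ≠ v` of `u`, away from `u`, is part of the
branch at `u` away from `v`: a walk from `w` to `v` avoiding `u` would close a cycle through the
edge `uv`. -/
theorem branch_subset (hA : G.IsAcyclic) {u v w x : V} (huv : G.Adj u v) (huw : G.Adj u w)
    (hwv : w ≠ v) (hx : x ∈ G.branch w u) : x ∈ G.branch u v ∧ x ≠ u := by
  obtain ⟨p, hp⟩ := hx
  refine ⟨⟨Walk.cons huw p, ?_⟩, ?_⟩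
  · rw [Walk.support_cons, List.mem_cons, not_or]
    refine ⟨huv.ne', fun hv => ?_⟩
    have hb := isBridge_iff_forall_walk_mem_edges.1
      (isAcyclic_iff_forall_adj_isBridge.1 hA huv) (Walk.cons huw (p.takeUntil v hv))
    rw [Walk.edges_cons, List.mem_cons] at hb
    rcases hb with hb | hb
    · exact hwv (Sym2.congr_right.1 hb).symm
    · exact hp (p.support_takeUntil_subset_support hv (Walk.fst_mem_support_of_mem_edges _ hb))
  · rintro rfl
    exact hp p.end_mem_support

/-- If `S` omits `v` and contains the branch at `u` away from `v`, the message `Y_{u→v}` is `z` times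
the ratio of the matching sums of `S ∖ u` and `S`. -/
theorem vertZ_ratio (hA : G.IsAcyclic) {z : ℝ} (hz : 0 < z) {Y : G.DEdge → ℝ}
    (hY : G.IsBPFixed z Y) (n : ℕ) : ∀ (S : Finset V) (u v : V), S.card = n → G.Adj u v → v ∉ S →
      (∀ x ∈ G.branch u v, x ∈ S) →
      z * G.vertZ z (S.erase u) = G.msg Y u v * G.vertZ z S := by
  induction n with
  | zero =>
    intro S u v hS huv _ hb
    have : u ∈ S := hb u ⟨Walk.nil, by simpa using huv.ne'⟩
    rw [Finset.card_eq_zero.1 hS] at this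
    simp at this
  | succ n ih =>
    intro S u v hS huv hv hb
    have hu : u ∈ S := hb u ⟨Walk.nil, by simpa using huv.ne'⟩
    -- All neighbours of `u` except `v` lie in the branch at `u`, hence in `S`.
    have hN : (G.neighborFinset u).filter (· ∈ S) = (G.neighborFinset u).erase v := by
      ext w
      simp only [Finset.mem_filter, mem_neighborFinset, Finset.mem_erase]
      constructor
      · rintro ⟨h, hw⟩
        exact ⟨fun hc => hv (hc ▸ hw), h⟩
      · rintro ⟨hne, h⟩
        exact ⟨h, hb w ⟨Walk.cons h Walk.nil, by simp [huv.ne', hne.symm]⟩⟩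
    have hrec := G.vertZ_rec z hu
    rw [hN, Finset.sum_congr rfl (g := fun w => G.msg Y w u * G.vertZ z (S.erase u)),
      ← Finset.sum_mul, ← exclSum_eq] at hrec
    · have hfix := hY.2 ⟨(u, v), huv⟩
      have hnn := G.exclSum_nonneg_s2 hY u v
      have hm : G.msg Y u v = z * (1 / (1 + G.exclSum Y u v)) := by
        rw [msg, dif_pos huv]
        exact hfix
      rw [hm, hrec]
      field_simp
    · intro w hw
      simp only [Finset.mem_erase, mem_neighborFinset] at hw
      refine ih (S.erase u) w u ?_ hw.2.symm (by simp) ?_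
      · rw [Finset.card_erase_of_mem hu, hS, Nat.add_sub_cancel]
      · intro x hx
        have := branch_subset hA huv hw.2 hw.1 hx
        exact Finset.mem_erase.2 ⟨this.2, hb x this.1⟩

theorem matchIn_univ (B : G.edgeSet → Bool) : G.MatchIn Finset.univ B ↔ G.IsMatchingVec B := by
  simp [MatchIn]

end SimpleGraph

/-- On a finite tree, the law of `B_e` under the Gibbs distribution `μ_G^z` is Bernoulli with
parameter `Y_{e⃗}(z) ℛ_{−e⃗}(Y(z)) / (1 + Y_{e⃗}(z) ℛ_{−e⃗}(Y(z)))`. -/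
theorem labp_tree_marginal (G : SimpleGraph V) [DecidableRel G.Adj] (hT : G.IsTree)
    (z : ℝ) (hz : 0 < z) (Y : G.DEdge → ℝ) (hY : G.IsBPFixed z Y)
    (u v : V) (huv : G.Adj u v) :
    (∑ B : G.edgeSet → Bool,
        if G.IsMatchingVec B ∧ B ⟨s(u, v), G.mem_edgeSet.mpr huv⟩ then z ^ G.mWeight B else 0) /
      G.gibbsP z =
    Y ⟨(u, v), huv⟩ * G.bpR Y ⟨(v, u), huv.symm⟩ /
      (1 + Y ⟨(u, v), huv⟩ * G.bpR Y ⟨(v, u), huv.symm⟩) := by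
  classical
  have hratio : ∀ w, G.Adj v w → z * G.vertZ z ((Finset.univ.erase v).erase w) =
      G.msg Y w v * G.vertZ z (Finset.univ.erase v) := by
    intro w hw
    refine G.vertZ_ratio hT.isAcyclic hz hY _ _ w v rfl hw.symm (by simp) ?_
    rintro x ⟨p, hp⟩
    refine Finset.mem_erase.2 ⟨?_, Finset.mem_univ _⟩
    rintro rfl
    exact hp p.end_mem_support
  have hmsg : G.msg Y u v = Y ⟨(u, v), huv⟩ := dif_pos huv
  have hnum : (∑ B : G.edgeSet → Bool,
      if G.IsMatchingVec B ∧ B ⟨s(u, v), G.mem_edgeSet.mpr huv⟩ then z ^ G.mWeight B else 0) =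
      Y ⟨(u, v), huv⟩ * G.vertZ z (Finset.univ.erase v) := by
    rw [← hmsg, ← hratio u huv.symm, Finset.erase_right_comm,
      ← G.sum_uses z huv (Finset.mem_univ _) (Finset.mem_univ _)]
    refine Finset.sum_congr rfl fun B _ => if_congr ?_ rfl rfl
    rw [G.matchIn_univ, SimpleGraph.Uses, exists_prop_of_true huv]
  have hden : G.gibbsP z =
      (1 + G.exclSum Y v u + Y ⟨(u, v), huv⟩) * G.vertZ z (Finset.univ.erase v) := by
    have h1 : G.gibbsP z = G.vertZ z Finset.univ :=
      Finset.sum_congr rfl fun B _ => if_congr (G.matchIn_univ B).symm rfl rfl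
    rw [h1, G.vertZ_rec z (Finset.mem_univ v)]
    simp only [Finset.mem_univ, Finset.filter_true]
    rw [Finset.sum_congr rfl fun w hw => hratio w ((G.mem_neighborFinset _ _).1 hw),
      ← Finset.sum_mul, G.exclSum_eq, ← hmsg,
      ← Finset.add_sum_erase _ _ ((G.mem_neighborFinset v u).2 huv.symm)]
    ring
  have hZ := G.vertZ_pos hz (Finset.univ.erase v)
  have hnn := G.exclSum_nonneg_s2 hY v u
  have hy := hY.1 ⟨(u, v), huv⟩
  have hbp : G.bpR Y ⟨(v, u), huv.symm⟩ = 1 / (1 + G.exclSum Y v u) := rfl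
  rw [hnum, hden, hbp]
  field_simp
end

section
/- If G = (U ∪ W, E) is a finite bipartite graph and I^Y ∈ {0,1}^{E⃗} is defined by I^Y_{e⃗} = 1 if and only if lim_{z→∞} Y_{e⃗}(z) = ∞, then the set V(I^Y) is a minimum vertex cover of G: it is a vertex cover and |V(I^Y)| = τ(G). -/
/-!
The idea is asymptotic linear programming duality. For a fixed point `Y(z)`, the edge weights
`x_{uv} = Y_{v→u} / (1 + S_u)`, with `S_u` the total message into `u`, are symmetric because
`Y_{u→v} (1 + S_u) = z + Y_{u→v} Y_{v→u}`; since the weights at `u` add up to `S_u / (1 + S_u)`,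
they form a fractional matching.

Monotonicity of `Y` in `z` (`IsBPFixed.mono`) gives the dichotomy that every message is bounded or
tends to infinity. Hence the messages `v → w` with `(𝒫_G I)_{v→w} = 1` grow linearly in `z`
(`Lin.linear`), and every vertex of `V(I)` receives an unbounded message, so it is saturated in the
limit (`tendsto_sum_edgeWt`). An edge with both ends in `V(I)` has weight tending to zero
(`tendsto_edgeWt_zero`). Comparing with the weight seen by an arbitrary vertex cover yields
`|V(I)| ≤ τ(G)` (`card_le_of_saturated`). That `V(I)` covers every edge follows from
`exists_lin_of_not_big`, the relevant half of `I = 𝒫_G (𝒫_G I)`.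
-/

open Finset Filter Topology

variable {V : Type*} [Fintype V] [DecidableEq V]

namespace SimpleGraph
variable (G : SimpleGraph V) [DecidableRel G.Adj]

/-- The set `V(I)` for a bipartition `c` (`c v = true` for `v ∈ U`, `c v = false` for `v ∈ W`):
`u ∈ U` is in `V(I)` iff `Σ_{v ∈ ∂u} I_{v→u} ≥ 1`, and `w ∈ W` is in `V(I)` iff
`Σ_{v ∈ ∂w} (𝒫_G I)_{v→w} ≥ 2`. -/
def coverSet (c : V → Bool) (I : G.DEdge → ℕ) : Finset V :=
  Finset.univ.filter (fun v => if c v then 1 ≤ G.inFlow I v else 2 ≤ G.inFlow (G.bpP I) v)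

end SimpleGraph


namespace SimpleGraph

variable (G : SimpleGraph V) [DecidableRel G.Adj]

/-! ### Messages as sums over all vertices -/

/-- Messages on directed edges, extended by zero to all ordered pairs of vertices. This allows
sums over neighbourhoods to be written as sums over all vertices. -/
def extZ {M : Type*} [Zero M] (X : G.DEdge → M) (a b : V) : M :=
  if h : G.Adj a b then X ⟨(a, b), h⟩ else 0

lemma extZ_of_adj {M : Type*} [Zero M] (X : G.DEdge → M) {a b : V} (h : G.Adj a b) :
    G.extZ X a b = X ⟨(a, b), h⟩ := dif_pos h

lemma extZ_of_not_adj {M : Type*} [Zero M] (X : G.DEdge → M) {a b : V} (h : ¬ G.Adj a b) :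
    G.extZ X a b = 0 := dif_neg h

lemma exclSum_eq_s8 {M : Type*} [AddCommMonoid M] (X : G.DEdge → M) (u v : V) :
    G.exclSum X u v = ∑ w ∈ univ.erase v, G.extZ X w u := by
  have h1 : G.exclSum X u v
      = ∑ w ∈ ((G.neighborFinset u).erase v).attach, G.extZ X w.1 u :=
    Finset.sum_congr rfl fun w _ => (G.extZ_of_adj X _).symm
  rw [h1, Finset.sum_attach _ (fun w => G.extZ X w u)]
  refine Finset.sum_subset (Finset.erase_subset_erase _ (Finset.subset_univ _)) ?_
  intro w hw hw'
  refine G.extZ_of_not_adj X fun h => hw' ?_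
  exact Finset.mem_erase.2 ⟨(Finset.mem_erase.1 hw).1, (G.mem_neighborFinset _ _).2 h.symm⟩

lemma inFlow_eq {M : Type*} [AddCommMonoid M] (X : G.DEdge → M) (u : V) :
    G.inFlow X u = ∑ w, G.extZ X w u := by
  have h1 : G.inFlow X u = ∑ w ∈ (G.neighborFinset u).attach, G.extZ X w.1 u :=
    Finset.sum_congr rfl fun w _ => (G.extZ_of_adj X _).symm
  rw [h1, Finset.sum_attach _ (fun w => G.extZ X w u)]
  refine Finset.sum_subset (Finset.subset_univ _) ?_
  intro w _ hw'
  exact G.extZ_of_not_adj X fun h => hw' ((G.mem_neighborFinset _ _).2 h.symm)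

lemma two_le_sum_iff (f : V → ℕ) (hf : ∀ a, f a ≤ 1) :
    2 ≤ ∑ a, f a ↔ ∃ a b, a ≠ b ∧ f a = 1 ∧ f b = 1 := by
  have h : ∑ a, f a = (univ.filter fun a => f a = 1).card := by
    rw [Finset.card_filter]
    refine Finset.sum_congr rfl fun a _ => ?_
    have := hf a
    split_ifs <;> omega
  rw [h, Nat.succ_le_iff, Finset.one_lt_card]
  simp only [Finset.mem_filter, Finset.mem_univ, true_and]
  grind

/-! ### Monotonicity in the activity -/

/-- Fixed points are monotone in `z`. The proof simultaneously treats antitonicity of `Y(z) / z`: it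
bounds by `1` the largest of all ratios `Y_e(z) / Y_e(z')` and
`(Y_e(z') / z') / (Y_e(z) / z)`: one application of the map to a common bound `α > 1` for these
ratios produces a strictly better bound. -/
lemma IsBPFixed.mono {z z' : ℝ} (hz : 0 < z) (hzz : z ≤ z') {Y Y' : G.DEdge → ℝ}
    (h : G.IsBPFixed z Y) (h' : G.IsBPFixed z' Y') (e : G.DEdge) : Y e ≤ Y' e := by
  have hz' : 0 < z' := hz.trans_le hzz
  obtain ⟨m, -, hm⟩ := Finset.exists_max_image univ
    (fun e => max (Y e / Y' e) ((Y' e / z') / (Y e / z))) ⟨e, Finset.mem_univ e⟩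
  set α := max (Y m / Y' m) ((Y' m / z') / (Y m / z)) with hα
  have b1 : ∀ e, Y e ≤ α * Y' e := fun e =>
    (div_le_iff₀ (h'.1 e)).1 ((le_max_left _ _).trans (hm e (Finset.mem_univ e)))
  have b2 : ∀ e, Y' e * z ≤ α * (Y e * z') := fun e => by
    have := (le_max_right _ _).trans (hm e (Finset.mem_univ e))
    have h0 : 0 < Y e / z := div_pos (h.1 e) hz
    rw [div_le_iff₀ h0, div_le_iff₀ hz'] at this
    have e1 : α * (Y e / z) * z' * z = α * (Y e * z') := by field_simp
    calc Y' e * z ≤ α * (Y e / z) * z' * z := by gcongr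
      _ = _ := e1
  suffices hα1 : α ≤ 1 by
    calc Y e ≤ α * Y' e := b1 e
      _ ≤ 1 * Y' e := by have := (h'.1 e).le; gcongr
      _ = Y' e := one_mul _
  by_contra! hlt
  set S := G.exclSum Y m.1.1 m.1.2 with hS
  set S' := G.exclSum Y' m.1.1 m.1.2 with hS'
  have S0 : 0 ≤ S := Finset.sum_nonneg fun _ _ => (h.1 _).le
  have S0' : 0 ≤ S' := Finset.sum_nonneg fun _ _ => (h'.1 _).le
  have s1 : S ≤ α * S' := by
    rw [hS, hS', exclSum, exclSum, Finset.mul_sum]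
    exact Finset.sum_le_sum fun _ _ => b1 _
  have s2 : S' * z ≤ α * (S * z') := by
    rw [hS, hS', exclSum, exclSum, Finset.sum_mul, Finset.sum_mul, Finset.mul_sum]
    exact Finset.sum_le_sum fun _ _ => b2 _
  have y1 : Y m = z * (1 / (1 + S)) := h.2 m
  have y2 : Y' m = z' * (1 / (1 + S')) := h'.2 m
  rcases max_choice (Y m / Y' m) ((Y' m / z') / (Y m / z)) with hc | hc
  · have : α = z * (1 + S') / (z' * (1 + S)) := by
      rw [hα, hc, y1, y2]; field_simp
    rw [eq_div_iff (by positivity)] at this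
    nlinarith
  · have : α = (1 + S) / (1 + S') := by
      rw [hα, hc, y1, y2]; field_simp
    rw [eq_div_iff (by positivity)] at this
    nlinarith

/-! ### Growth of messages as the activity tends to infinity -/

/-- The message `u → v` tends to infinity as `z → ∞`; false when `uv` is not an edge, since the
extended message is then constantly zero. -/
def Big (Y : ℝ → G.DEdge → ℝ) (u v : V) : Prop :=
  Tendsto (fun z => G.extZ (Y z) u v) atTop atTop

/-- The directed edges on which the Boolean map `bpP`, applied to `Big`, takes the value one. -/
def Lin (Y : ℝ → G.DEdge → ℝ) (u v : V) : Prop :=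
  G.Adj u v ∧ ∀ w, w ≠ v → ¬ G.Big Y w u

variable {G}
variable {Y : ℝ → G.DEdge → ℝ}

lemma Big.adj {u v : V} (h : G.Big Y u v) : G.Adj u v := by
  by_contra hn
  have : (fun z => G.extZ (Y z) u v) = fun _ => 0 := by
    funext z; exact G.extZ_of_not_adj _ hn
  rw [Big, this] at h
  exact not_tendsto_const_atTop _ _ h

lemma extZ_nonneg (hY : ∀ z, 0 < z → G.IsBPFixed z (Y z)) {z : ℝ} (hz : 0 < z) (u v : V) :
    0 ≤ G.extZ (Y z) u v := by
  unfold extZ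
  split_ifs
  · exact ((hY z hz).1 _).le
  · exact le_rfl

lemma extZ_fixed (hY : ∀ z, 0 < z → G.IsBPFixed z (Y z)) {z : ℝ} (hz : 0 < z) {u v : V}
    (h : G.Adj u v) :
    G.extZ (Y z) u v * (1 + ∑ w ∈ univ.erase v, G.extZ (Y z) w u) = z := by
  have h0 : 0 ≤ ∑ w ∈ univ.erase v, G.extZ (Y z) w u :=
    Finset.sum_nonneg fun w _ => extZ_nonneg hY hz _ _
  rw [G.extZ_of_adj _ h, (hY z hz).2, bpR, exclSum_eq_s8]
  field_simp

/-- By monotonicity in `z`, a message that does not tend to infinity is bounded. -/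
lemma bounded_of_not_big (hY : ∀ z, 0 < z → G.IsBPFixed z (Y z)) {u v : V}
    (h : ¬ G.Big Y u v) : ∃ B, ∀ z, 0 < z → G.extZ (Y z) u v ≤ B := by
  rw [Big, tendsto_atTop] at h
  push Not at h
  obtain ⟨B, hB⟩ := h
  refine ⟨B, fun z hz => ?_⟩
  obtain ⟨z', hz', hlt⟩ := frequently_atTop.1 hB z
  refine le_trans ?_ hlt.le
  unfold extZ
  split_ifs with ha
  · exact IsBPFixed.mono G hz hz' (hY z hz) (hY z' (hz.trans_le hz')) _
  · exact le_rfl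

/-- If all messages into `u` other than `v → u` are bounded, the message `u → v` grows linearly. -/
lemma Lin.linear (hY : ∀ z, 0 < z → G.IsBPFixed z (Y z)) {u v : V} (h : G.Lin Y u v) :
    ∃ c, 0 < c ∧ ∀ z, 0 < z → c * z ≤ G.extZ (Y z) u v := by
  have hb : ∀ w, ∃ B, w ≠ v → ∀ z, 0 < z → G.extZ (Y z) w u ≤ B := fun w => by
    by_cases hw : w = v
    · exact ⟨0, fun h => (h hw).elim⟩
    · obtain ⟨B, hB⟩ := bounded_of_not_big hY (h.2 w hw)
      exact ⟨B, fun _ => hB⟩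
  choose B hB using hb
  have hle : ∀ z, 0 < z → 1 + ∑ w ∈ univ.erase v, G.extZ (Y z) w u
      ≤ 1 + |∑ w ∈ univ.erase v, B w| := fun z hz => by
    gcongr
    refine le_trans (Finset.sum_le_sum fun w hw => ?_) (le_abs_self _)
    exact hB w (Finset.mem_erase.1 hw).1 z hz
  refine ⟨(1 + |∑ w ∈ univ.erase v, B w|)⁻¹, by positivity, fun z hz => ?_⟩
  rw [inv_mul_le_iff₀ (by positivity)]
  calc z = G.extZ (Y z) u v * (1 + ∑ w ∈ univ.erase v, G.extZ (Y z) w u) :=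
        (extZ_fixed hY hz h.1).symm
    _ ≤ G.extZ (Y z) u v * (1 + |∑ w ∈ univ.erase v, B w|) := by
        have := extZ_nonneg hY hz u v
        have := hle z hz
        gcongr
    _ = _ := mul_comm _ _

lemma Lin.big (hY : ∀ z, 0 < z → G.IsBPFixed z (Y z)) {u v : V} (h : G.Lin Y u v) :
    G.Big Y u v := by
  obtain ⟨c, hc, hl⟩ := h.linear hY
  refine tendsto_atTop_mono' atTop ?_ (tendsto_id.const_mul_atTop hc)
  filter_upwards [eventually_gt_atTop 0] with z hz using hl z hz

/-- If every neighbour `v ≠ u` of `w` receives an unbounded message not from `w`, then each message `v → w`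
is `o(z)`, so `w → u` is unbounded. -/
lemma exists_lin_of_not_big (hY : ∀ z, 0 < z → G.IsBPFixed z (Y z)) {w u : V}
    (hwu : G.Adj w u) (h : ¬ G.Big Y w u) : ∃ v, v ≠ u ∧ G.Lin Y v w := by
  by_contra! hn
  apply h
  have key : ∀ v ∈ univ.erase u, Tendsto (fun z => G.extZ (Y z) v w / z) atTop (𝓝 0) := by
    intro v hv
    by_cases hvw : G.Adj v w
    · have := hn v (Finset.mem_erase.1 hv).1
      simp only [Lin, hvw, true_and] at this
      push Not at this
      obtain ⟨x, hx, hb⟩ := this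
      refine squeeze_zero' ?_ ?_ (tendsto_inv_atTop_zero.comp hb)
      · filter_upwards [eventually_gt_atTop 0] with z hz
        exact div_nonneg (extZ_nonneg hY hz _ _) hz.le
      · filter_upwards [eventually_gt_atTop 0, hb.eventually_gt_atTop 0] with z hz hp
        have e := extZ_fixed hY hz hvw
        have h0 := extZ_nonneg hY hz v w
        have hs : G.extZ (Y z) x v ≤ ∑ a ∈ univ.erase w, G.extZ (Y z) a v :=
          Finset.single_le_sum (f := fun a => G.extZ (Y z) a v)
            (fun a _ => extZ_nonneg hY hz _ _)
            (Finset.mem_erase.2 ⟨hx, Finset.mem_univ _⟩)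
        simp only [Function.comp]
        rw [div_le_iff₀ hz, inv_mul_eq_div, le_div_iff₀ hp]
        nlinarith
    · simp [G.extZ_of_not_adj _ hvw]
  have hsum : Tendsto (fun z => z⁻¹ + ∑ v ∈ univ.erase u, G.extZ (Y z) v w / z) atTop
      (𝓝 (0 + ∑ v ∈ univ.erase u, (0 : ℝ))) :=
    tendsto_inv_atTop_zero.add (tendsto_finsetSum _ key)
  rw [Finset.sum_const_zero, add_zero] at hsum
  have hpos : ∀ᶠ z in atTop,
      z⁻¹ + ∑ v ∈ univ.erase u, G.extZ (Y z) v w / z ∈ Set.Ioi (0 : ℝ) := by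
    filter_upwards [eventually_gt_atTop 0] with z hz
    have : 0 ≤ ∑ v ∈ univ.erase u, G.extZ (Y z) v w / z :=
      Finset.sum_nonneg fun v _ => div_nonneg (extZ_nonneg hY hz _ _) hz.le
    exact add_pos_of_pos_of_nonneg (inv_pos.2 hz) this
  have hinv := (tendsto_nhdsWithin_iff.2 ⟨hsum, hpos⟩).inv_tendsto_nhdsGT_zero
  refine hinv.congr' ?_
  filter_upwards [eventually_gt_atTop 0] with z hz
  have e := extZ_fixed hY hz hwu
  have h0 : 0 ≤ ∑ v ∈ univ.erase u, G.extZ (Y z) v w :=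
    Finset.sum_nonneg fun w _ => extZ_nonneg hY hz _ _
  rw [Pi.inv_apply, ← Finset.sum_div, inv_eq_one_div z, ← add_div, inv_div, eq_comm,
    eq_div_iff (by positivity)]
  exact e

/-! ### The fractional matching of edge weights -/

/-- The weight `Y_{v→u} / (1 + ∑_w Y_{w→u})` of the edge `uv` (the edge marginal that belief
propagation assigns to `uv`). It is symmetric on fixed points. -/
noncomputable def edgeWt (y : V → V → ℝ) (u v : V) : ℝ := y v u / (1 + ∑ w, y w u)

lemma edgeWt_nonneg (hY : ∀ z, 0 < z → G.IsBPFixed z (Y z)) {z : ℝ} (hz : 0 < z) (u v : V) :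
    0 ≤ edgeWt (G.extZ (Y z)) u v :=
  div_nonneg (extZ_nonneg hY hz _ _)
    (add_nonneg zero_le_one (Finset.sum_nonneg fun _ _ => extZ_nonneg hY hz _ _))

lemma edgeWt_of_not_adj {z : ℝ} {u v : V} (h : ¬ G.Adj u v) :
    edgeWt (G.extZ (Y z)) u v = 0 := by
  rw [edgeWt, G.extZ_of_not_adj _ (fun h' => h h'.symm), zero_div]

lemma edgeWt_comm (hY : ∀ z, 0 < z → G.IsBPFixed z (Y z)) {z : ℝ} (hz : 0 < z) (u v : V) :
    edgeWt (G.extZ (Y z)) u v = edgeWt (G.extZ (Y z)) v u := by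
  by_cases h : G.Adj u v
  · have e1 := extZ_fixed hY hz h
    have e2 := extZ_fixed hY hz h.symm
    have t1 := Finset.add_sum_erase univ (fun w => G.extZ (Y z) w u) (Finset.mem_univ v)
    have t2 := Finset.add_sum_erase univ (fun w => G.extZ (Y z) w v) (Finset.mem_univ u)
    have p1 : 0 ≤ ∑ w, G.extZ (Y z) w u := Finset.sum_nonneg fun _ _ => extZ_nonneg hY hz _ _
    have p2 : 0 ≤ ∑ w, G.extZ (Y z) w v := Finset.sum_nonneg fun _ _ => extZ_nonneg hY hz _ _
    rw [edgeWt, edgeWt, div_eq_div_iff (by positivity) (by positivity), ← t1, ← t2]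
    linear_combination e2 - e1
  · rw [edgeWt_of_not_adj h, edgeWt_of_not_adj fun h' => h h'.symm]

lemma sum_edgeWt (y : V → V → ℝ) (u : V) :
    ∑ v, edgeWt y u v = (∑ w, y w u) / (1 + ∑ w, y w u) := by
  simp only [edgeWt, ← Finset.sum_div]

lemma tendsto_inflow_of_big (hY : ∀ z, 0 < z → G.IsBPFixed z (Y z)) {u v : V}
    (h : G.Big Y v u) : Tendsto (fun z => ∑ w, G.extZ (Y z) w u) atTop atTop := by
  refine tendsto_atTop_mono' atTop ?_ h
  filter_upwards [eventually_gt_atTop 0] with z hz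
  exact Finset.single_le_sum (f := fun a => G.extZ (Y z) a u)
    (fun a _ => extZ_nonneg hY hz _ _) (Finset.mem_univ _)

/-- A vertex receiving an unbounded message is saturated in the limit. -/
lemma tendsto_sum_edgeWt (hY : ∀ z, 0 < z → G.IsBPFixed z (Y z)) {u v : V}
    (h : G.Big Y v u) : Tendsto (fun z => ∑ a, edgeWt (G.extZ (Y z)) u a) atTop (𝓝 1) := by
  have h1 : Tendsto (fun s : ℝ => s / (1 + s)) atTop (𝓝 1) := by
    have : Tendsto (fun s : ℝ => 1 - (1 + s)⁻¹) atTop (𝓝 (1 - 0)) :=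
      tendsto_const_nhds.sub
        (tendsto_inv_atTop_zero.comp (tendsto_atTop_add_const_left _ _ tendsto_id))
    rw [sub_zero] at this
    refine this.congr' ?_
    filter_upwards [eventually_gt_atTop 0] with s hs
    field_simp
    ring
  simp only [sum_edgeWt]
  exact h1.comp (tendsto_inflow_of_big hY h)

/-- Asymptotic complementary slackness: an edge `uw` covered at both ends carries vanishing
weight. Linear growth of some `v → w` with `v ≠ u` keeps `w → u` bounded, while the total message
flowing into `u` is unbounded. -/
lemma tendsto_edgeWt_zero (hY : ∀ z, 0 < z → G.IsBPFixed z (Y z)) {u w v x : V}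
    (hx : G.Big Y x u) (hvu : v ≠ u) (hv : G.Lin Y v w) :
    Tendsto (fun z => edgeWt (G.extZ (Y z)) u w) atTop (𝓝 0) := by
  by_cases huw : G.Adj u w
  swap
  · simp only [edgeWt_of_not_adj huw, tendsto_const_nhds]
  obtain ⟨c, hc, hl⟩ := hv.linear hY
  have hlim : Tendsto (fun z => c⁻¹ / (1 + ∑ a, G.extZ (Y z) a u)) atTop (𝓝 0) :=
    tendsto_const_nhds.div_atTop
      (tendsto_atTop_add_const_left _ _ (tendsto_inflow_of_big hY hx))
  refine squeeze_zero' ?_ ?_ hlim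
  · filter_upwards [eventually_gt_atTop 0] with z hz using edgeWt_nonneg hY hz _ _
  · filter_upwards [eventually_gt_atTop 0] with z hz
    have p1 : 0 ≤ ∑ a, G.extZ (Y z) a u := Finset.sum_nonneg fun _ _ => extZ_nonneg hY hz _ _
    have e := extZ_fixed hY hz huw.symm
    have hs : G.extZ (Y z) v w ≤ ∑ a ∈ univ.erase u, G.extZ (Y z) a w :=
      Finset.single_le_sum (f := fun a => G.extZ (Y z) a w)
        (fun a _ => extZ_nonneg hY hz _ _) (Finset.mem_erase.2 ⟨hvu, Finset.mem_univ _⟩)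
    have h0 := extZ_nonneg hY hz w u
    have hcz := hl z hz
    have hbd : G.extZ (Y z) w u ≤ c⁻¹ := by
      rw [← one_div, le_div_iff₀ hc]
      have : G.extZ (Y z) w u * c * z ≤ 1 * z := by nlinarith
      exact le_of_mul_le_mul_right this hz
    unfold edgeWt
    gcongr

/-! ### Comparison with an arbitrary vertex cover -/

/-- If `D` is saturated in the limit and edges inside `D` carry vanishing weight, then `D` is no
larger than any vertex cover `C`: counting edge weight at the vertices of `C` catches every edge at
least once, counting it at `D` catches every edge at most once, up to a vanishing error. -/
lemma card_le_of_saturated (hY : ∀ z, 0 < z → G.IsBPFixed z (Y z)) (C D : Finset V)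
    (hC : ∀ u v, G.Adj u v → u ∈ C ∨ v ∈ C)
    (hsat : ∀ u ∈ D, Tendsto (fun z => ∑ a, edgeWt (G.extZ (Y z)) u a) atTop (𝓝 1))
    (hzero : ∀ u ∈ D, ∀ v ∈ D, Tendsto (fun z => edgeWt (G.extZ (Y z)) u v) atTop (𝓝 0)) :
    D.card ≤ C.card := by
  have hl : Tendsto (fun z => 2 * ∑ u ∈ D, ∑ a, edgeWt (G.extZ (Y z)) u a) atTop
      (𝓝 (2 * ∑ u ∈ D, (1 : ℝ))) := (tendsto_finsetSum _ hsat).const_mul 2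
  have hr : Tendsto (fun z => 2 * (C.card : ℝ) + ∑ u ∈ D, ∑ v ∈ D, edgeWt (G.extZ (Y z)) u v)
      atTop (𝓝 (2 * (C.card : ℝ) + ∑ u ∈ D, ∑ v ∈ D, (0 : ℝ))) :=
    tendsto_const_nhds.add
      (tendsto_finsetSum _ fun u hu => tendsto_finsetSum _ fun v hv => hzero u hu v hv)
  have hfin := le_of_tendsto_of_tendsto hl hr ?_
  · simp only [Finset.sum_const, nsmul_eq_mul, mul_one, mul_zero, add_zero] at hfin
    have : (D.card : ℝ) ≤ C.card := by linarith
    exact_mod_cast this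
  filter_upwards [eventually_gt_atTop 0] with z hz
  set x := edgeWt (G.extZ (Y z)) with hx
  -- Symmetry of `x` turns twice a vertex sum into a sum over ordered pairs.
  have hdouble : ∀ A : Finset V, 2 * ∑ u ∈ A, ∑ a, x u a
      = ∑ u, ∑ a, ((if u ∈ A then 1 else 0) + (if a ∈ A then 1 else 0)) * x u a := by
    intro A
    have h1 : ∑ u ∈ A, ∑ a, x u a = ∑ u, ∑ a, (if u ∈ A then 1 else 0) * x u a := by
      simp [Finset.sum_ite_mem]
    have h2 : ∑ u ∈ A, ∑ a, x u a = ∑ u, ∑ a, (if a ∈ A then 1 else 0) * x u a := by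
      rw [h1, Finset.sum_comm]
      refine Finset.sum_congr rfl fun u _ => Finset.sum_congr rfl fun a _ => ?_
      rw [hx, edgeWt_comm hY hz]
    simp only [add_mul, Finset.sum_add_distrib]
    rw [← h1, ← h2, two_mul]
  have hinner : ∑ u ∈ D, ∑ v ∈ D, x u v
      = ∑ u, ∑ a, ((if u ∈ D then 1 else 0) * (if a ∈ D then 1 else 0)) * x u a := by
    simp [Finset.sum_ite_mem]
  have hCle : 2 * ∑ u ∈ C, ∑ a, x u a ≤ 2 * (C.card : ℝ) := by
    gcongr
    rw [Finset.card_eq_sum_ones, Nat.cast_sum, Nat.cast_one]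
    refine Finset.sum_le_sum fun u _ => ?_
    have p1 : 0 ≤ ∑ a, G.extZ (Y z) a u := Finset.sum_nonneg fun _ _ => extZ_nonneg hY hz _ _
    rw [hx, sum_edgeWt, div_le_one (by positivity)]
    linarith
  refine le_trans ?_ (add_le_add_left hCle _)
  rw [hdouble, hdouble, hinner, ← Finset.sum_add_distrib]
  refine Finset.sum_le_sum fun u _ => ?_
  rw [← Finset.sum_add_distrib]
  refine Finset.sum_le_sum fun a _ => ?_
  have hx0 : 0 ≤ x u a := edgeWt_nonneg hY hz u a
  rw [← add_mul]
  by_cases hua : G.Adj u a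
  · refine mul_le_mul_of_nonneg_right ?_ hx0
    rcases hC u a hua with h | h <;> simp only [h, if_true] <;> split_ifs <;> norm_num
  · rw [hx, edgeWt_of_not_adj hua, mul_zero, mul_zero]

/-! ### Boolean messages and the set `V(I)` -/

lemma extZ_eq_one_iff {I : G.DEdge → ℕ}
    (hI : ∀ e, I e = 1 ↔ Tendsto (fun z => Y z e) atTop atTop) (u v : V) :
    G.extZ I u v = 1 ↔ G.Big Y u v := by
  by_cases h : G.Adj u v
  · simp only [Big, G.extZ_of_adj _ h, hI]
  · simp only [G.extZ_of_not_adj _ h, zero_ne_one, false_iff]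
    exact fun hb => h hb.adj

lemma extZ_le_one {I : G.DEdge → ℕ} (hI01 : ∀ e, I e ≤ 1) (u v : V) : G.extZ I u v ≤ 1 := by
  unfold extZ
  split_ifs
  · exact hI01 _
  · exact zero_le_one

lemma extZ_eq_zero_iff {I : G.DEdge → ℕ} (hI01 : ∀ e, I e ≤ 1)
    (hI : ∀ e, I e = 1 ↔ Tendsto (fun z => Y z e) atTop atTop) (u v : V) :
    G.extZ I u v = 0 ↔ ¬ G.Big Y u v := by
  rw [← extZ_eq_one_iff hI]
  have := extZ_le_one hI01 u v
  omega

lemma one_le_inFlow_iff {I : G.DEdge → ℕ} (hI01 : ∀ e, I e ≤ 1)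
    (hI : ∀ e, I e = 1 ↔ Tendsto (fun z => Y z e) atTop atTop) (u : V) :
    1 ≤ G.inFlow I u ↔ ∃ v, G.Big Y v u := by
  rw [inFlow_eq, Nat.one_le_iff_ne_zero, Ne, Finset.sum_eq_zero_iff]
  simp [extZ_eq_zero_iff hI01 hI]

lemma two_le_inFlow_bpP_iff {I : G.DEdge → ℕ} (hI01 : ∀ e, I e ≤ 1)
    (hI : ∀ e, I e = 1 ↔ Tendsto (fun z => Y z e) atTop atTop) (w : V) :
    2 ≤ G.inFlow (G.bpP I) w ↔ ∃ a b, a ≠ b ∧ G.Lin Y a w ∧ G.Lin Y b w := by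
  have hP : ∀ e, G.bpP I e ≤ 1 := fun e => by unfold bpP; split_ifs <;> simp
  have hL : ∀ a, G.extZ (G.bpP I) a w = 1 ↔ G.Lin Y a w := fun a => by
    by_cases h : G.Adj a w
    · rw [G.extZ_of_adj _ h]
      simp [bpP, exclSum_eq_s8, Lin, h, extZ_eq_zero_iff hI01 hI]
    · simp [G.extZ_of_not_adj _ h, Lin, h]
  rw [inFlow_eq, two_le_sum_iff _ (fun a => extZ_le_one hP a w)]
  simp only [hL]

end SimpleGraph

/-- On a finite bipartite graph, `V(I^Y)` is a minimum vertex cover. -/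
theorem labp_bipartite_min_cover (G : SimpleGraph V) [DecidableRel G.Adj]
    (c : V → Bool) (hc : ∀ u v, G.Adj u v → c u ≠ c v)
    (Y : ℝ → G.DEdge → ℝ) (hY : ∀ z, 0 < z → G.IsBPFixed z (Y z))
    (I : G.DEdge → ℕ) (hI01 : ∀ e, I e ≤ 1)
    (hI : ∀ e, I e = 1 ↔ Filter.Tendsto (fun z => Y z e) Filter.atTop Filter.atTop)
    (τ : ℕ)
    (hτ : IsLeast {n : ℕ | ∃ C : Finset V, (∀ u v, G.Adj u v → u ∈ C ∨ v ∈ C) ∧ C.card = n} τ) :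
    (∀ u v, G.Adj u v → u ∈ G.coverSet c I ∨ v ∈ G.coverSet c I) ∧
    (G.coverSet c I).card = τ := by
  classical
  have hmemU : ∀ u, c u = true → (u ∈ G.coverSet c I ↔ ∃ v, G.Big Y v u) := fun u hu => by
    simp [SimpleGraph.coverSet, hu, ← SimpleGraph.one_le_inFlow_iff hI01 hI]
  have hmemW : ∀ w, c w = false → (w ∈ G.coverSet c I ↔
      ∃ a b, a ≠ b ∧ G.Lin Y a w ∧ G.Lin Y b w) := fun w hw => by
    simp [SimpleGraph.coverSet, hw, ← SimpleGraph.two_le_inFlow_bpP_iff hI01 hI]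
  have hcov1 : ∀ u w, G.Adj u w → c u = true → c w = false →
      u ∈ G.coverSet c I ∨ w ∈ G.coverSet c I := by
    intro u w huw hu hw
    rw [hmemU u hu, hmemW w hw]
    by_contra! hn
    obtain ⟨h1, h2⟩ := hn
    obtain ⟨v, hvu, hv⟩ := SimpleGraph.exists_lin_of_not_big hY huw.symm (h1 w)
    exact h2 u v hvu.symm ⟨huw, fun a _ => h1 a⟩ hv
  have hcov : ∀ u v, G.Adj u v → u ∈ G.coverSet c I ∨ v ∈ G.coverSet c I := by
    intro u v huv
    have := hc u v huv
    cases hu : c u <;> cases hv : c v <;> simp only [hu, hv, ne_eq, not_true_eq_false] at this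
    · exact (hcov1 v u huv.symm hv hu).symm
    · exact hcov1 u v huv hu hv
  refine ⟨hcov, le_antisymm ?_ (hτ.2 ⟨_, hcov, rfl⟩)⟩
  obtain ⟨C, hC, rfl⟩ := hτ.1
  have hzero1 : ∀ u ∈ G.coverSet c I, ∀ w ∈ G.coverSet c I, c u = true → c w = false →
      Tendsto (fun z => SimpleGraph.edgeWt (G.extZ (Y z)) u w) atTop (𝓝 0) := by
    intro u hu w hw hcu hcw
    obtain ⟨x, hx⟩ := (hmemU u hcu).1 hu
    obtain ⟨a, b, hab, ha, hb⟩ := (hmemW w hcw).1 hw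
    -- Of the two linearly growing messages into `w`, one does not come from `u`.
    by_cases hau : a = u
    · exact SimpleGraph.tendsto_edgeWt_zero hY hx (fun h => hab (hau.trans h.symm)) hb
    · exact SimpleGraph.tendsto_edgeWt_zero hY hx hau ha
  refine SimpleGraph.card_le_of_saturated hY C _ hC (fun u hu => ?_) (fun u hu v hv => ?_)
  · cases hcu : c u
    · obtain ⟨a, _, _, ha, _⟩ := (hmemW u hcu).1 hu
      exact SimpleGraph.tendsto_sum_edgeWt hY (ha.big hY)
    · obtain ⟨x, hx⟩ := (hmemU u hcu).1 hu
      exact SimpleGraph.tendsto_sum_edgeWt hY hx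
  · by_cases huv : G.Adj u v
    · have hne := hc u v huv
      cases hcu : c u <;> cases hcv : c v <;> simp only [hcu, hcv, ne_eq, not_true_eq_false] at hne
      · refine (hzero1 v hv u hu hcv hcu).congr' ?_
        filter_upwards [eventually_gt_atTop 0] with z hz
        exact SimpleGraph.edgeWt_comm hY hz v u
      · exact hzero1 u hu v hv hcu hcv
    · simp only [SimpleGraph.edgeWt_of_not_adj huv, tendsto_const_nhds]
end
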